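/- arXiv:0909.4915 — 2 statements merged into one kernel-verified Lean document; each statement's English description precedes it below -/
import Mathlib

section
/- Let P be a topological space with a countable base and let {μ_p}_{p∈P} be a family of probability measures on ℝ^d, each absolutely continuous with respect to Lebesgue measure, depending continuously on p, and with all supports contained in a single compact set. Parameterize closed halfspaces by pairs (u, c) ∈ S^{d−1} × ℝ via H(u,c) = {x ∈ ℝ^d : ⟨x, u⟩ ≥ c}. Then the function (p, u, c) ↦ μ_p(H(u,c)) is continuous on P × S^{d−1} × ℝ. -/
open scoped InnerProductSpace ENNReal
open MeasureTheory

/-!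
Let `C ⊆ Q × X` be closed. Near a fixed `q₀`, the complement of the slice `C_q₀` is exhausted from
within by an increasing sequence of open sets, each avoiding all slices `C_q` with `q` close to
`q₀`. Hence the measure of the complement of `C_q` is lower semicontinuous, jointly in the measure
and in `q`, and that of `C_q` is upper semicontinuous. For the incidence relation between points
and halfspaces, closed and open halfspaces differ by a null hyperplane, so both semicontinuities
hold for the same function.
-/

open Set Filter Topology

section Slices

variable {P Q X : Type*} [TopologicalSpace P] [TopologicalSpace Q] [TopologicalSpace X]

theorem upperSemicontinuous_of_add_lowerSemicontinuous {f g : X → ℝ≥0∞}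
    (hfg : UpperSemicontinuous fun x => f x + g x) (hg : LowerSemicontinuous g)
    (hg_top : ∀ x, g x ≠ ∞) : UpperSemicontinuous f := by
  intro x₀ y hy
  have hlt : f x₀ + g x₀ < y + g x₀ := ENNReal.add_lt_add_right (hg_top x₀) hy
  obtain ⟨z, hz_left, hz_right⟩ := exists_between hlt
  have hyg : LowerSemicontinuous fun x => y + g x := lowerSemicontinuous_const.add hg
  filter_upwards [hfg x₀ z hz_left, hyg x₀ z hz_right] with x hx_left hx_right
  exact lt_of_add_lt_add_right (hx_left.trans hx_right)

theorem exists_monotone_isOpen_iUnion_eq_slice [FirstCountableTopology Q] {W : Set (Q × X)}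
    (hW : IsOpen W) (q₀ : Q) :
    ∃ U : ℕ → Set X, Monotone U ∧ (∀ n, IsOpen (U n)) ∧ ⋃ n, U n = Prod.mk q₀ ⁻¹' W ∧
      ∀ n, ∀ᶠ q in 𝓝 q₀, U n ⊆ Prod.mk q ⁻¹' W := by
  obtain ⟨N, hN⟩ := (𝓝 q₀).exists_antitone_basis
  let U : ℕ → Set X := fun n => interior {x | ∀ q ∈ N n, (q, x) ∈ W}
  have hU_subset (n : ℕ) : ∀ q ∈ N n, U n ⊆ Prod.mk q ⁻¹' W :=
    fun q hq _ hx => interior_subset hx q hq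
  refine ⟨U, fun m n hmn => interior_mono fun x hx q hq => hx q (hN.antitone hmn hq),
    fun n => isOpen_interior, Subset.antisymm ?_ fun x hx => ?_,
    fun n => eventually_of_mem (hN.mem n) (hU_subset n)⟩
  · exact iUnion_subset fun n => hU_subset n q₀ (mem_of_mem_nhds (hN.mem n))
  · obtain ⟨A, hA, B, hB, hAB⟩ := mem_nhds_prod_iff.1 (hW.mem_nhds hx)
    obtain ⟨n, hn⟩ := hN.mem_iff.1 hA
    exact mem_iUnion.2 ⟨n, mem_interior_iff_mem_nhds.2 <|
      mem_of_superset hB fun _ hx' q hq => hAB ⟨hn hq, hx'⟩⟩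

variable [FirstCountableTopology Q] [MeasurableSpace X] {μ : P → Measure X} {W C : Set (Q × X)}

theorem lowerSemicontinuous_measure_slice
    (hμ : ∀ U : Set X, IsOpen U → LowerSemicontinuous fun p => μ p U) (hW : IsOpen W) :
    LowerSemicontinuous fun z : P × Q => μ z.1 (Prod.mk z.2 ⁻¹' W) := by
  rintro ⟨p₀, q₀⟩ y hy
  obtain ⟨U, hU_mono, hU_open, hU_iUnion, hU_subset⟩ :=
    exists_monotone_isOpen_iUnion_eq_slice hW q₀
  have hU_tendsto : Tendsto (fun n => μ p₀ (U n)) atTop (𝓝 (μ p₀ (Prod.mk q₀ ⁻¹' W))) :=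
    hU_iUnion ▸ tendsto_measure_iUnion_atTop hU_mono
  obtain ⟨n, hn⟩ := (hU_tendsto.eventually_const_lt hy).exists
  rw [nhds_prod_eq]
  filter_upwards [(hμ _ (hU_open n) p₀ y hn).prod_mk (hU_subset n)] with z ⟨hlt, hsubset⟩
  exact hlt.trans_le (measure_mono hsubset)

variable [OpensMeasurableSpace X] [∀ p, IsFiniteMeasure (μ p)]

theorem upperSemicontinuous_measure_slice
    (hμ : ∀ U : Set X, IsOpen U → LowerSemicontinuous fun p => μ p U)
    (hμ_univ : UpperSemicontinuous fun p => μ p univ) (hC : IsClosed C) :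
    UpperSemicontinuous fun z : P × Q => μ z.1 (Prod.mk z.2 ⁻¹' C) := by
  refine upperSemicontinuous_of_add_lowerSemicontinuous ?_
    (lowerSemicontinuous_measure_slice hμ hC.isOpen_compl) fun z => measure_ne_top _ _
  have hslice (q : Q) : MeasurableSet (Prod.mk q ⁻¹' C) :=
    (hC.preimage (Continuous.prodMk_right q)).measurableSet
  simpa only [preimage_compl, measure_add_measure_compl (hslice _)] using!
    hμ_univ.comp continuous_fst

theorem continuous_measure_slice
    (hμ : ∀ U : Set X, IsOpen U → LowerSemicontinuous fun p => μ p U)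
    (hμ_univ : UpperSemicontinuous fun p => μ p univ) (hW : IsOpen W) (hC : IsClosed C)
    (hWC : ∀ p q, Prod.mk q ⁻¹' W =ᵐ[μ p] Prod.mk q ⁻¹' C) :
    Continuous fun z : P × Q => μ z.1 (Prod.mk z.2 ⁻¹' C) := by
  refine continuous_iff_lower_upperSemicontinuous.2
    ⟨?_, upperSemicontinuous_measure_slice hμ hμ_univ hC⟩
  simpa only [measure_congr (hWC _ _)] using lowerSemicontinuous_measure_slice hμ hW

end Slices

section Halfspaces

variable {E : Type*} [NormedAddCommGroup E] [InnerProductSpace ℝ E] [MeasurableSpace E]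

theorem addHaar_hyperplane [BorelSpace E] [FiniteDimensional ℝ E] (ν : Measure E)
    [ν.IsAddHaarMeasure] {u : E} (hu : u ≠ 0) (c : ℝ) : ν {x | ⟪x, u⟫_ℝ = c} = 0 := by
  let H : AffineSubspace ℝ E := (AffineSubspace.mk' c ⊥).comap (innerₛₗ ℝ u).toAffineMap
  have mem_H (x : E) : x ∈ H ↔ ⟪x, u⟫_ℝ = c := by
    simp [H, sub_eq_zero, real_inner_comm]
  have hH : H ≠ ⊤ := by
    intro htop
    have h0 : ⟪(0 : E), u⟫_ℝ = c := (mem_H 0).1 (htop ▸ AffineSubspace.mem_top ℝ E 0)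
    have hu_mem : ⟪u, u⟫_ℝ = c := (mem_H u).1 (htop ▸ AffineSubspace.mem_top ℝ E u)
    exact hu (inner_self_eq_zero.1 (hu_mem.trans (h0.symm.trans (inner_zero_left u))))
  have hH_coe : (H : Set E) = {x | ⟪x, u⟫_ℝ = c} := Set.ext mem_H
  exact hH_coe ▸ Measure.addHaar_affineSubspace ν H hH

theorem halfspace_measure_continuous_general {P : Type*} [TopologicalSpace P]
    [OpensMeasurableSpace E] {μ : P → Measure E} [∀ p, IsFiniteMeasure (μ p)]
    (hμ : ∀ U : Set E, IsOpen U → LowerSemicontinuous fun p => μ p U)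
    (hμ_univ : UpperSemicontinuous fun p => μ p univ)
    (hnull : ∀ p, ∀ u ∈ Metric.sphere (0 : E) 1, ∀ c : ℝ, μ p {x | ⟪x, u⟫_ℝ = c} = 0) :
    Continuous fun q : P × Metric.sphere (0 : E) 1 × ℝ =>
      μ q.1 {x | q.2.2 ≤ ⟪x, (q.2.1 : E)⟫_ℝ} := by
  let W : Set ((Metric.sphere (0 : E) 1 × ℝ) × E) := {z | z.1.2 < ⟪z.2, (z.1.1 : E)⟫_ℝ}
  let C : Set ((Metric.sphere (0 : E) 1 × ℝ) × E) := {z | z.1.2 ≤ ⟪z.2, (z.1.1 : E)⟫_ℝ}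
  have hW : IsOpen W := isOpen_lt (by fun_prop) (by fun_prop)
  have hC : IsClosed C := isClosed_le (by fun_prop) (by fun_prop)
  refine continuous_measure_slice (C := C) hμ hμ_univ hW hC fun p ⟨u, c⟩ => ?_
  have hne : ∀ᵐ x ∂μ p, ⟪x, (u : E)⟫_ℝ ≠ c := by
    simpa [ae_iff] using hnull p u u.2 c
  filter_upwards [hne] with x hx
  exact propext hx.symm.le_iff_lt.symm

end Halfspaces

/-- Continuity of halfspace measures: for a family of absolutely continuous
probability measures on `ℝ^d`, depending continuously on a parameter from a
second-countable space, with all supports in a single compact set, the measure of the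
closed halfspace `{x | ⟪x,u⟫ ≥ c}` is jointly continuous in the parameter and in the
halfspace `(u, c) ∈ S^{d-1} × ℝ`. -/
theorem halfspace_measure_continuous (d : ℕ) {P : Type*} [TopologicalSpace P]
    [SecondCountableTopology P]
    (μ : P → Measure (EuclideanSpace ℝ (Fin d)))
    (hprob : ∀ p, IsProbabilityMeasure (μ p))
    (hac : ∀ p, μ p ≪ volume)
    (hcont : ∀ U : Set (EuclideanSpace ℝ (Fin d)), IsOpen U →
      Continuous fun p => μ p U)
    (K : Set (EuclideanSpace ℝ (Fin d))) (hK : IsCompact K)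
    (hsupp : ∀ p, μ p Kᶜ = 0) :
    Continuous fun q : P × Metric.sphere (0 : EuclideanSpace ℝ (Fin d)) 1 × ℝ =>
      μ q.1 {x | q.2.2 ≤ ⟪x, (q.2.1 : EuclideanSpace ℝ (Fin d))⟫_ℝ} :=
  halfspace_measure_continuous_general (fun U hU => (hcont U hU).lowerSemicontinuous)
    (hcont univ isOpen_univ).upperSemicontinuous
    fun p u hu c => hac p (addHaar_hyperplane volume (ne_zero_of_mem_unit_sphere ⟨u, hu⟩) c)
end

section
/- Let μ be a probability measure on ℝ^d, absolutely continuous with respect to Lebesgue measure, with compact support. Let cent μ = {x ∈ ℝ^d : every closed halfspace containing x has μ-measure at least 1/(d+1)}. Then cent μ is either a single point or a compact convex set with nonempty interior. -/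
open scoped InnerProductSpace ENNReal
open MeasureTheory

/-- The set of central points of a measure `μ` on `ℝ^d`: points `x` such that every
closed halfspace containing `x` has `μ`-measure at least `1/(d+1)`. -/
def cent {d : ℕ} (μ : Measure (EuclideanSpace ℝ (Fin d))) :
    Set (EuclideanSpace ℝ (Fin d)) :=
  {x | ∀ (u : EuclideanSpace ℝ (Fin d)) (c : ℝ), ‖u‖ = 1 → c ≤ ⟪x, u⟫_ℝ →
    1 / ((d : ℝ≥0∞) + 1) ≤ μ {y | c ≤ ⟪y, u⟫_ℝ}}

/-!
The points of depth at least `a` are those lying in every compact convex set whose complement has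
measure less than `a`: this gives compactness and convexity, and Helly's theorem gives existence
when `(d + 1) a` is at most the total mass.

Suppose the region has empty interior but contains two points `x ≠ z`. The closed halfspaces of
measure at most `a` that meet the region at most in their boundary form a compact family (once
their thresholds are bounded above), so `x` cannot be moved strictly off all of them,
which means that `0` is a convex combination of the inner normals `u` of those through `x`. As
`⟪z - x, u⟫ ≤ 0` for each such `u`, only normals orthogonal to `z - x` contribute, and these span a
space of dimension less than `d`; by Carathéodory's theorem at most `d` of them suffice. The
corresponding `d` halfspaces cover the space, so the total mass is at most `d a`, a contradiction.
-/

open Filter Topology Module Set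

section Convex

variable {E : Type*} [AddCommGroup E] [Module ℝ E] {s : Set E} {x : E}

theorem mem_convexHull_inter_of_forall_le (hx : x ∈ convexHull ℝ s) (f : E →ₗ[ℝ] ℝ)
    (hf : ∀ y ∈ s, f y ≤ f x) : x ∈ convexHull ℝ (s ∩ {y | f y = f x}) := by
  obtain ⟨ι, _, z, w, hzs, -, hw, hw1, hwz⟩ := eq_pos_convex_span_of_mem_convexHull hx
  have hz i : z i ∈ s := hzs (mem_range_self i)
  have hgap : ∑ i, w i * (f x - f (z i)) = 0 := by
    simp only [mul_sub, Finset.sum_sub_distrib, ← Finset.sum_mul, hw1, ← hwz, map_sum, map_smul,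
      smul_eq_mul, one_mul, sub_self]
  have hfz i : f (z i) = f x := by
    have hterm := (Finset.sum_eq_zero_iff_of_nonneg fun i _ ↦
      mul_nonneg (hw i).le (sub_nonneg.2 (hf _ (hz i)))).1 hgap i (Finset.mem_univ i)
    exact (sub_eq_zero.1 ((mul_eq_zero.1 hterm).resolve_left (hw i).ne')).symm
  rw [← hwz]
  exact (convex_convexHull ℝ _).sum_mem (fun i _ ↦ (hw i).le) hw1 fun i _ ↦
    subset_convexHull ℝ _ ⟨hz i, by rw [mem_ofPred_eq, hwz, hfz]⟩

theorem exists_finset_card_le_finrank_of_mem_convexHull [FiniteDimensional ℝ E]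
    (hx : x ∈ convexHull ℝ s) {f : E →ₗ[ℝ] ℝ} (hf0 : f ≠ 0) (hf : ∀ y ∈ s, f y ≤ f x) :
    ∃ t : Finset E, ↑t ⊆ s ∧ t.card ≤ finrank ℝ E ∧ x ∈ convexHull ℝ (t : Set E) := by
  have hface := mem_convexHull_inter_of_forall_le hx f hf
  rw [convexHull_eq_union] at hface
  simp only [mem_iUnion] at hface
  obtain ⟨t, hts, hind, hxt⟩ := hface
  refine ⟨t, hts.trans inter_subset_left, ?_, hxt⟩
  have hspan : vectorSpan ℝ (range ((↑) : t → E)) ≤ LinearMap.ker f := by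
    rw [vectorSpan_def, Submodule.span_le]
    rintro _ ⟨_, ⟨y, rfl⟩, _, ⟨z, rfl⟩, rfl⟩
    simp [(hts y.2).2.out, (hts z.2).2.out]
  calc t.card = Fintype.card t := (Fintype.card_coe t).symm
    _ ≤ finrank ℝ (vectorSpan ℝ (range ((↑) : t → E))) + 1 := hind.card_le_finrank_succ
    _ ≤ finrank ℝ (LinearMap.ker f) + 1 := by gcongr; exact Submodule.finrank_mono hspan
    _ = finrank ℝ E := Module.Dual.finrank_ker_add_one_of_ne_zero hf0

theorem convexHull_range_eq_image_stdSimplex {ι : Type*} [Fintype ι] (v : ι → E) :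
    convexHull ℝ (range v) = (fun w ↦ ∑ i, w i • v i) '' stdSimplex ℝ ι := by
  classical
  have hsum : (fun w : ι → ℝ ↦ ∑ i, w i • v i) = Fintype.linearCombination ℝ v := by
    ext w
    rw [Fintype.linearCombination_apply]
  rw [hsum, ← convexHull_rangle_single_eq_stdSimplex, LinearMap.image_convexHull, ← range_comp]
  congr 2
  ext i
  simp

theorem convexHull_eq_image_stdSimplex_prod_pi [FiniteDimensional ℝ E] (s : Set E) :
    convexHull ℝ s =
      (fun q : (Fin (finrank ℝ E + 1) → ℝ) × (Fin (finrank ℝ E + 1) → E) ↦ ∑ i, q.1 i • q.2 i) ''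
        (stdSimplex ℝ (Fin (finrank ℝ E + 1)) ×ˢ univ.pi fun _ ↦ s) := by
  refine Subset.antisymm (fun x hx ↦ ?_) ?_
  · rw [convexHull_eq_union] at hx
    simp only [mem_iUnion] at hx
    obtain ⟨t, hts, hind, hxt⟩ := hx
    have : Nonempty t := (convexHull_nonempty_iff.1 ⟨x, hxt⟩).to_subtype
    have hcard : Fintype.card t ≤ Fintype.card (Fin (finrank ℝ E + 1)) := by
      rw [Fintype.card_fin]
      exact hind.card_le_finrank_succ.trans (by gcongr; exact Submodule.finrank_le _)
    obtain ⟨e⟩ := Function.Embedding.nonempty_of_card_le hcard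
    have hsurj := Function.invFun_surjective e.injective
    set z : Fin (finrank ℝ E + 1) → E := Subtype.val ∘ Function.invFun e
    have hz : range z = t := by rw [hsurj.range_comp, Subtype.range_coe]
    rw [← hz, convexHull_range_eq_image_stdSimplex] at hxt
    obtain ⟨w, hw, rfl⟩ := hxt
    exact ⟨(w, z), ⟨hw, fun i _ ↦ hts (hz ▸ mem_range_self i)⟩, rfl⟩
  · rintro _ ⟨⟨w, z⟩, ⟨hw, hz⟩, rfl⟩
    exact (convex_convexHull ℝ s).sum_mem (fun i _ ↦ hw.1 i) hw.2 fun i _ ↦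
      subset_convexHull ℝ s (hz i (mem_univ i))

theorem isCompact_convexHull [TopologicalSpace E] [IsTopologicalAddGroup E] [ContinuousSMul ℝ E]
    [FiniteDimensional ℝ E] (hs : IsCompact s) : IsCompact (convexHull ℝ s) := by
  rw [convexHull_eq_image_stdSimplex_prod_pi]
  exact ((isCompact_stdSimplex ℝ _).prod (isCompact_univ_pi fun _ ↦ hs)).image (by fun_prop)

end Convex

section InnerProductSpace

variable {E : Type*} [NormedAddCommGroup E] [InnerProductSpace ℝ E]

theorem exists_forall_inner_lt_or_zero_mem_convexHull [FiniteDimensional ℝ E] {S : Set (E × ℝ)}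
    (hS : IsCompact S) {x : E} (hx : ∀ p ∈ S, ⟪x, p.1⟫_ℝ ≤ p.2) :
    (∃ y, ∀ p ∈ S, ⟪y, p.1⟫_ℝ < p.2) ∨ 0 ∈ convexHull ℝ {u | (u, ⟪x, u⟫_ℝ) ∈ S} := by
  -- All slacks are nonnegative, so only pairs of slack zero can contribute to a convex combination
  -- equal to `0`. If there is none, a separating functional is a direction to move `x` in.
  set slack : E × ℝ → E × ℝ := fun p ↦ (p.1, p.2 - ⟪x, p.1⟫_ℝ) with hslack
  have hcompact : IsCompact (convexHull ℝ (slack '' S)) :=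
    isCompact_convexHull (hS.image (by fun_prop))
  by_cases h0 : (0 : E × ℝ) ∈ convexHull ℝ (slack '' S)
  · right
    have hface := mem_convexHull_inter_of_forall_le h0 (-LinearMap.snd ℝ E ℝ) (by
      rintro _ ⟨p, hp, rfl⟩
      simpa [hslack] using hx p hp)
    have hfst := mem_image_of_mem (LinearMap.fst ℝ E ℝ) hface
    rw [LinearMap.image_convexHull, map_zero] at hfst
    refine convexHull_mono ?_ hfst
    rintro _ ⟨_, ⟨⟨⟨u, c⟩, hp, rfl⟩, htouch⟩, rfl⟩
    have hc : c = ⟪x, u⟫_ℝ := by simpa [hslack, sub_eq_zero] using htouch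
    simpa [hslack, ← hc] using hp
  · left
    obtain ⟨f, r, hfr, hr⟩ :=
      geometric_hahn_banach_closed_point (convex_convexHull ℝ _) hcompact.isClosed h0
    set v := (InnerProductSpace.toDual ℝ E).symm (f.comp (.inl ℝ E ℝ))
    set γ := f (0, 1)
    have hsep p (hp : p ∈ S) : ⟪v, p.1⟫_ℝ + (p.2 - ⟪x, p.1⟫_ℝ) * γ < 0 := by
      have hsplit : f (slack p) = ⟪v, p.1⟫_ℝ + (p.2 - ⟪x, p.1⟫_ℝ) * γ := by
        rw [InnerProductSpace.toDual_symm_apply, ← smul_eq_mul, ← map_smul]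
        simp [hslack, ← map_add]
      rw [← hsplit, ← map_zero f]
      exact (hfr _ (subset_convexHull ℝ _ (mem_image_of_mem slack hp))).trans hr
    refine ⟨x + (|γ| + 1)⁻¹ • v, fun p hp ↦ ?_⟩
    have hv : ⟪v, p.1⟫_ℝ < (|γ| + 1) * (p.2 - ⟪x, p.1⟫_ℝ) := by
      nlinarith [hsep p hp, hx p hp, neg_abs_le γ]
    have := (inv_mul_lt_iff₀ (by positivity)).2 hv
    rw [inner_add_left, real_inner_smul_left]
    linarith

/-- The closed halfspace with inner normal `u` and threshold `c`; no normalisation of `u` is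
imposed, so `u = 0` gives `∅` or the whole space. -/
def closedHalfSpace (u : E) (c : ℝ) : Set E :=
  {y | c ≤ ⟪y, u⟫_ℝ}

theorem isClosed_closedHalfSpace (u : E) (c : ℝ) : IsClosed (closedHalfSpace u c) :=
  isClosed_le (by fun_prop) (by fun_prop)

theorem convex_compl_closedHalfSpace (u : E) (c : ℝ) : Convex ℝ (closedHalfSpace u c)ᶜ := by
  have : (closedHalfSpace u c)ᶜ = (innerₗ E).flip u ⁻¹' Iio c := by
    ext y
    simp [closedHalfSpace, real_inner_comm]
  exact this ▸ (convex_Iio c).linear_preimage _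

theorem closedHalfSpace_smul {r : ℝ} (hr : 0 < r) (u : E) (c : ℝ) :
    closedHalfSpace (r • u) (r * c) = closedHalfSpace u c := by
  ext y
  simp only [closedHalfSpace, mem_ofPred_eq, real_inner_smul_right, mul_le_mul_iff_right₀ hr]

theorem univ_subset_biUnion_closedHalfSpace {t : Set E} (ht : 0 ∈ convexHull ℝ t) (x : E) :
    univ ⊆ ⋃ u ∈ t, closedHalfSpace u ⟪x, u⟫_ℝ := by
  intro y _
  by_contra hy
  simp only [closedHalfSpace, mem_iUnion, mem_ofPred_eq, not_exists, not_le] at hy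
  have hpos : convexHull ℝ t ⊆ (closedHalfSpace (y - x) 0)ᶜ :=
    convexHull_min (fun u hu ↦ by
      have := hy u hu
      rw [real_inner_comm u, real_inner_comm u] at this
      simpa [closedHalfSpace, inner_sub_right] using this) (convex_compl_closedHalfSpace _ _)
  exact hpos ht (by simp [closedHalfSpace])

section Measure

variable [MeasurableSpace E] {μ : Measure E} {a : ℝ≥0∞} {x : E}

/-- The region of Tukey (halfspace) depth at least `a`: the points all of whose closed halfspaces
have `μ`-measure at least `a`. For `a = 1 / (d + 1)` on `ℝ^d` this is `cent μ`. -/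
def depthRegion (μ : Measure E) (a : ℝ≥0∞) : Set E :=
  {x | ∀ (u : E) (c : ℝ), ‖u‖ = 1 → x ∈ closedHalfSpace u c → a ≤ μ (closedHalfSpace u c)}

theorem le_measure_closedHalfSpace_of_mem_depthRegion (hx : x ∈ depthRegion μ a) {u : E}
    (hu : u ≠ 0) {c : ℝ} (hxc : x ∈ closedHalfSpace u c) : a ≤ μ (closedHalfSpace u c) := by
  have hr : 0 < ‖u‖⁻¹ := inv_pos.2 (norm_pos_iff.2 hu)
  rw [← closedHalfSpace_smul hr] at hxc ⊢
  exact hx _ _ (norm_smul_inv_norm (𝕜 := ℝ) hu) hxc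

/-- The pairs `(u, c)` with `c ≤ R` such that the halfspace `{y | c ≤ ⟪y, u⟫}` has measure at most
`a` and `{y | ⟪y, u⟫ ≤ c}` contains `depthRegion μ a`. Measure exactly `a` is allowed so that the
set is closed; the second condition then still has to be imposed, as `c` may lie strictly inside an
interval of `a`-quantiles in direction `u`. -/
def cappingHalfSpaces (μ : Measure E) (a : ℝ≥0∞) (R : ℝ) : Set (E × ℝ) :=
  {p | ‖p.1‖ = 1 ∧ p.2 ≤ R ∧ μ (closedHalfSpace p.1 p.2) ≤ a ∧
    ∀ x ∈ depthRegion μ a, ⟪x, p.1⟫_ℝ ≤ p.2}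

theorem mem_cappingHalfSpaces_of_measure_lt {R : ℝ} {u : E} (hu : ‖u‖ = 1) {c : ℝ} (hc : c ≤ R)
    (hlt : μ (closedHalfSpace u c) < a) : (u, c) ∈ cappingHalfSpaces μ a R :=
  ⟨hu, hc, hlt.le, fun _ hx ↦ le_of_lt (not_le.1 fun hcx ↦ hlt.not_ge (hx u c hu hcx))⟩

theorem mem_interior_depthRegion {R : ℝ} (hR : ∀ u : E, ‖u‖ = 1 → μ (closedHalfSpace u R) < a)
    (hcompact : IsCompact (cappingHalfSpaces μ a R))
    (hx : ∀ p ∈ cappingHalfSpaces μ a R, ⟪x, p.1⟫_ℝ < p.2) : x ∈ interior (depthRegion μ a) := by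
  have hnear : ∀ᶠ z in 𝓝 x, ∀ p ∈ cappingHalfSpaces μ a R, ⟪z, p.1⟫_ℝ < p.2 :=
    hcompact.eventually_forall_of_forall_eventually fun p hp ↦
      ContinuousAt.eventually_lt (by fun_prop) (by fun_prop) (hx p hp)
  rw [mem_interior_iff_mem_nhds]
  filter_upwards [hnear] with z hz u c hu hzc
  by_contra! hlt
  rcases le_total c R with hcR | hRc
  · exact (hz _ (mem_cappingHalfSpaces_of_measure_lt hu hcR hlt)).not_ge hzc
  · exact (hz _ (mem_cappingHalfSpaces_of_measure_lt hu le_rfl (hR u hu))).not_ge (hRc.trans hzc)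

theorem measure_univ_le_finrank_mul_of_zero_mem_convexHull [FiniteDimensional ℝ E] {U : Set E}
    (h0 : 0 ∈ convexHull ℝ U) {w : E} (hw : w ≠ 0) (hUw : ∀ u ∈ U, ⟪w, u⟫_ℝ ≤ 0)
    (hU : ∀ u ∈ U, μ (closedHalfSpace u ⟪x, u⟫_ℝ) ≤ a) : μ univ ≤ finrank ℝ E * a := by
  obtain ⟨t, htU, htcard, h0t⟩ := exists_finset_card_le_finrank_of_mem_convexHull h0
    (f := innerₗ E w) (fun h ↦ hw (inner_self_eq_zero.1 (LinearMap.congr_fun h w)))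
    (by simpa using hUw)
  calc μ univ ≤ μ (⋃ u ∈ t, closedHalfSpace u ⟪x, u⟫_ℝ) :=
        measure_mono (univ_subset_biUnion_closedHalfSpace h0t x)
    _ ≤ ∑ u ∈ t, μ (closedHalfSpace u ⟪x, u⟫_ℝ) := measure_biUnion_finset_le _ _
    _ ≤ t.card • a := Finset.sum_le_card_nsmul _ _ _ fun u hu ↦ hU u (htU hu)
    _ ≤ finrank ℝ E * a := by rw [nsmul_eq_mul]; gcongr

theorem nonempty_sInter_isCompact_convex_measure_compl_lt [FiniteDimensional ℝ E]
    (ha : (finrank ℝ E + 1) * a ≤ μ univ) :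
    (⋂₀ {C | IsCompact C ∧ Convex ℝ C ∧ μ Cᶜ < a}).Nonempty := by
  rw [sInter_eq_iInter]
  refine Convex.helly_theorem_compact' (𝕜 := ℝ) (fun C ↦ C.2.2.1) (fun C ↦ C.2.1) fun I hI ↦ ?_
  rcases I.eq_empty_or_nonempty with rfl | hne
  · simp
  have hlt : μ (⋃ C ∈ I, (C : Set E)ᶜ) < μ univ := calc
    μ (⋃ C ∈ I, (C : Set E)ᶜ) ≤ ∑ C ∈ I, μ (C : Set E)ᶜ := measure_biUnion_finset_le _ _
    _ < ∑ _C ∈ I, a := ENNReal.sum_lt_sum_of_nonempty hne fun C _ ↦ C.2.2.2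
    _ = I.card * a := by rw [Finset.sum_const, nsmul_eq_mul]
    _ ≤ (finrank ℝ E + 1) * a := by gcongr; exact_mod_cast hI
    _ ≤ μ univ := ha
  obtain ⟨y, hy⟩ := (ne_univ_iff_exists_notMem _).1 fun h ↦ hlt.ne (congrArg μ h)
  exact ⟨y, by simpa using hy⟩

variable [BorelSpace E]

theorem continuousAt_measure_closedHalfSpace [IsFiniteMeasure μ] {p : E × ℝ}
    (hp : μ {y | ⟪y, p.1⟫_ℝ = p.2} = 0) :
    ContinuousAt (fun q : E × ℝ ↦ μ (closedHalfSpace q.1 q.2)) p := by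
  refine tendsto_measure_of_ae_tendsto_indicator_of_isFiniteMeasure _
    (isClosed_closedHalfSpace _ _).measurableSet
    (fun _ ↦ (isClosed_closedHalfSpace _ _).measurableSet) ?_
  filter_upwards [measure_eq_zero_iff_ae_notMem.1 hp] with y hy
  have hinner : ContinuousAt (fun q : E × ℝ ↦ ⟪y, q.1⟫_ℝ) p := by fun_prop
  rcases lt_or_gt_of_ne hy with hlt | hgt
  · filter_upwards [hinner.eventually_lt continuousAt_snd hlt] with q hq
    exact iff_of_false hq.not_ge hlt.not_ge
  · filter_upwards [continuousAt_snd.eventually_lt hinner hgt] with q hq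
    exact iff_of_true hq.le hgt.le

variable [FiniteDimensional ℝ E]

theorem addHaar_setOf_inner_eq (ν : Measure E) [ν.IsAddHaarMeasure] {u : E} (hu : u ≠ 0)
    (c : ℝ) : ν {y | ⟪y, u⟫_ℝ = c} = 0 := by
  set H := (AffineSubspace.mk' c ⊥).comap ((innerₗ E).flip u).toAffineMap
  have hH : (H : Set E) = {y | ⟪y, u⟫_ℝ = c} := by
    ext y
    simp [H, sub_eq_zero, real_inner_comm]
  rw [← hH]
  refine Measure.addHaar_affineSubspace ν H fun htop ↦ hu ?_
  have hall y : ⟪y, u⟫_ℝ = c := by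
    have : y ∈ (H : Set E) := htop ▸ mem_univ y
    rwa [hH] at this
  rw [← inner_self_eq_zero (𝕜 := ℝ), hall, ← hall 0, inner_zero_left]

variable [IsFiniteMeasure μ]

theorem exists_isCompact_convex_subset_measure_compl_lt {H : Set E} (hH : MeasurableSet H)
    (hconv : Convex ℝ H) (ha : μ Hᶜ < a) :
    ∃ C ⊆ H, IsCompact C ∧ Convex ℝ C ∧ μ Cᶜ < a := by
  obtain ⟨Q, hQH, hQ, hQlt⟩ :=
    hH.exists_isCompact_sdiff_lt (measure_ne_top μ H) (tsub_pos_of_lt ha).ne'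
  refine ⟨convexHull ℝ Q, convexHull_min hQH hconv, isCompact_convexHull hQ,
    convex_convexHull ℝ Q, ?_⟩
  calc μ (convexHull ℝ Q)ᶜ ≤ μ (Hᶜ ∪ H \ Q) := measure_mono fun y hy ↦ by
        by_cases hyH : y ∈ H
        · exact .inr ⟨hyH, fun hyQ ↦ hy (subset_convexHull ℝ Q hyQ)⟩
        · exact .inl hyH
    _ ≤ μ Hᶜ + μ (H \ Q) := measure_union_le _ _
    _ < μ Hᶜ + (a - μ Hᶜ) := ENNReal.add_lt_add_left (measure_ne_top μ _) hQlt
    _ = a := add_tsub_cancel_of_le ha.le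

theorem depthRegion_eq_sInter (ha : a ≤ μ univ) :
    depthRegion μ a = ⋂₀ {C | IsCompact C ∧ Convex ℝ C ∧ μ Cᶜ < a} := by
  refine Subset.antisymm ?_ fun x hx u c _ hxc ↦ ?_
  · rintro x hx C ⟨hC, hconv, hCa⟩
    by_contra hxC
    obtain ⟨b, hb⟩ : C.Nonempty := by
      rw [nonempty_iff_ne_empty]
      rintro rfl
      exact hCa.not_ge (by rwa [compl_empty])
    obtain ⟨f, r, hfC, hfx⟩ := geometric_hahn_banach_closed_point hconv hC.isClosed hxC
    set v := (InnerProductSpace.toDual ℝ E).symm f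
    have hv y : ⟪y, v⟫_ℝ = f y := by
      rw [real_inner_comm, InnerProductSpace.toDual_symm_apply]
    have hv0 : v ≠ 0 := by
      intro h
      have := (hfC b hb).trans hfx
      simp [← hv, h] at this
    have hdisj : closedHalfSpace v r ⊆ Cᶜ := fun y hy hyC ↦
      (hfC y hyC).not_ge (hv y ▸ hy)
    exact hCa.not_ge ((le_measure_closedHalfSpace_of_mem_depthRegion hx hv0
      (show r ≤ ⟪x, v⟫_ℝ from hv x ▸ hfx.le)).trans (measure_mono hdisj))
  · by_contra! hlt
    obtain ⟨C, hCH, hC, hconv, hCa⟩ := exists_isCompact_convex_subset_measure_compl_lt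
      (isClosed_closedHalfSpace u c).measurableSet.compl (convex_compl_closedHalfSpace u c)
      (by rwa [compl_compl])
    exact hCH (hx C ⟨hC, hconv, hCa⟩) hxc

theorem isCompact_depthRegion (ha0 : a ≠ 0) (ha : a ≤ μ univ) : IsCompact (depthRegion μ a) := by
  obtain ⟨C, -, hC⟩ := exists_isCompact_convex_subset_measure_compl_lt (μ := μ) (a := a)
    MeasurableSet.univ convex_univ (by simpa using ha0.bot_lt)
  rw [depthRegion_eq_sInter ha]
  exact hC.1.of_isClosed_subset (isClosed_sInter fun _ hC ↦ hC.1.isClosed) (sInter_subset_of_mem hC)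

theorem convex_depthRegion (ha : a ≤ μ univ) : Convex ℝ (depthRegion μ a) := by
  rw [depthRegion_eq_sInter ha]
  exact convex_sInter fun _ hC ↦ hC.2.1

theorem exists_forall_measure_closedHalfSpace_lt (μ : Measure E) [IsFiniteMeasure μ]
    (ha0 : a ≠ 0) : ∃ R, ∀ u : E, ‖u‖ = 1 → μ (closedHalfSpace u R) < a := by
  obtain ⟨C, -, hC, -, hCa⟩ := exists_isCompact_convex_subset_measure_compl_lt (μ := μ) (a := a)
    MeasurableSet.univ convex_univ (by simpa using ha0.bot_lt)
  obtain ⟨R, -, hR⟩ := hC.isBounded.exists_pos_norm_lt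
  refine ⟨R, fun u hu ↦ (measure_mono fun y hy hyC ↦ ?_).trans_lt hCa⟩
  have := (real_inner_le_norm y u).trans_lt (by simpa [hu] using hR y hyC)
  exact this.not_ge hy

theorem isCompact_cappingHalfSpaces (hμ : ∀ u ≠ 0, ∀ c, μ {y | ⟪y, u⟫_ℝ = c} = 0)
    (hne : (depthRegion μ a).Nonempty) (R : ℝ) : IsCompact (cappingHalfSpaces μ a R) := by
  obtain ⟨x, hx⟩ := hne
  set B : Set (E × ℝ) := Metric.sphere 0 1 ×ˢ Icc (-‖x‖) R
  have hB : IsCompact B := (isCompact_sphere 0 1).prod isCompact_Icc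
  have hcont : ContinuousOn (fun p : E × ℝ ↦ μ (closedHalfSpace p.1 p.2)) B := fun p hp ↦
    (continuousAt_measure_closedHalfSpace
      (hμ _ (ne_zero_of_mem_unit_sphere ⟨p.1, hp.1⟩) _)).continuousWithinAt
  have hclosed : IsClosed {p : E × ℝ | ∀ z ∈ depthRegion μ a, ⟪z, p.1⟫_ℝ ≤ p.2} := by
    simp only [ofPred_forall]
    exact isClosed_biInter fun z _ ↦ isClosed_le (by fun_prop) (by fun_prop)
  have heq : cappingHalfSpaces μ a R =
      B ∩ (fun p : E × ℝ ↦ μ (closedHalfSpace p.1 p.2)) ⁻¹' Iic a ∩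
        {p | ∀ z ∈ depthRegion μ a, ⟪z, p.1⟫_ℝ ≤ p.2} := by
    ext p
    constructor
    · rintro ⟨hnorm, hR, hpa, hcap⟩
      have hlower : -‖x‖ ≤ ⟪x, p.1⟫_ℝ := by
        simpa [hnorm] using neg_le_of_abs_le (abs_real_inner_le_norm x p.1)
      exact ⟨⟨⟨mem_sphere_zero_iff_norm.2 hnorm, hlower.trans (hcap x hx), hR⟩, hpa⟩, hcap⟩
    · rintro ⟨⟨⟨hnorm, -, hR⟩, hpa⟩, hcap⟩
      exact ⟨mem_sphere_zero_iff_norm.1 hnorm, hR, hpa, hcap⟩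
  rw [heq]
  exact (hB.of_isClosed_subset (hcont.preimage_isClosed_of_isClosed hB.isClosed isClosed_Iic)
    inter_subset_left).inter_right hclosed

theorem cent_structure_general (hμ : ∀ u ≠ 0, ∀ c, μ {y | ⟪y, u⟫_ℝ = c} = 0) (ha0 : a ≠ 0)
    (ha : (finrank ℝ E + 1) * a ≤ μ univ) :
    (∃ x, depthRegion μ a = {x}) ∨ (IsCompact (depthRegion μ a) ∧ Convex ℝ (depthRegion μ a) ∧
      (interior (depthRegion μ a)).Nonempty) := by
  have ha1 : a ≤ μ univ := (le_mul_of_one_le_left' le_add_self).trans ha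
  have hne : (depthRegion μ a).Nonempty :=
    depthRegion_eq_sInter ha1 ▸ nonempty_sInter_isCompact_convex_measure_compl_lt ha
  rcases (depthRegion μ a).subsingleton_or_nontrivial with hsub | ⟨x, hx, z, hz, hxz⟩
  · exact .inl (exists_eq_singleton_iff_nonempty_subsingleton.2 ⟨hne, hsub⟩)
  obtain ⟨R, hR⟩ := exists_forall_measure_closedHalfSpace_lt μ ha0
  have hcompact := isCompact_cappingHalfSpaces hμ hne R
  refine .inr ⟨isCompact_depthRegion ha0 ha1, convex_depthRegion ha1, ?_⟩
  obtain ⟨y, hy⟩ | h0 :=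
    exists_forall_inner_lt_or_zero_mem_convexHull hcompact fun p hp ↦ hp.2.2.2 x hx
  · exact ⟨y, mem_interior_depthRegion hR hcompact hy⟩
  have hcover : μ univ ≤ finrank ℝ E * a :=
    measure_univ_le_finrank_mul_of_zero_mem_convexHull h0 (sub_ne_zero.2 hxz.symm)
      (fun u hu ↦ by rw [inner_sub_left, sub_nonpos]; exact hu.2.2.2 z hz) fun u hu ↦ hu.2.2.1
  have hstrict : finrank ℝ E * a < (finrank ℝ E + 1) * a :=
    ENNReal.mul_lt_mul_left ha0 (ha1.trans_lt (measure_lt_top μ univ)).ne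
      (ENNReal.lt_add_right (ENNReal.natCast_ne_top _) one_ne_zero)
  exact absurd (ha.trans hcover) hstrict.not_ge

end Measure

end InnerProductSpace

/-- Structure of the central point set: for an absolutely continuous compactly
supported probability measure on `ℝ^d`, `cent μ` is either a single point or a
compact convex set with nonempty interior. -/
theorem cent_structure (d : ℕ) (μ : Measure (EuclideanSpace ℝ (Fin d)))
    [IsProbabilityMeasure μ] (hac : μ ≪ volume)
    (K : Set (EuclideanSpace ℝ (Fin d))) (hK : IsCompact K) (hsupp : μ Kᶜ = 0) :
    (∃ x, cent μ = {x}) ∨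
      (IsCompact (cent μ) ∧ Convex ℝ (cent μ) ∧ (interior (cent μ)).Nonempty) :=
  cent_structure_general (fun _ hu c ↦ hac (addHaar_setOf_inner_eq volume hu c)) (a := 1 / (d + 1))
    (by simp) (by rw [finrank_euclideanSpace_fin, measure_univ]; exact ENNReal.mul_div_le)
end
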